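/- arXiv:2501.01354 — 2 statements merged into one kernel-verified Lean document; each statement's English description precedes it below -/
import Mathlib

section
/- For every λ_0, λ_1 with λ_crit < λ_0 ≤ λ_1 and every ε > 0 there exists N such that for all n ≥ N and every λ ∈ [λ_0, λ_1], H_n(θ^{(n)}(λ) + n^{−1/2}(ψ(λ θ^{(n)}(λ)) + ε)/β^{(n)}(λ), λ) ≤ −ε/(2 n^{1/2}). -/
open MeasureTheory Filter Topology Set

/-!
For `X ≥ 0` the function `φ(t) = E[X (1 - e^{-X t})]` is increasing and concave with derivative
`φ'(u) = E[X² e^{-X u}]`, so its graph lies below its tangents. The tangent at `λ θ(λ)` gives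
`φ(λ t) - t ≤ -β(λ) (t - θ(λ))` for every `t ≥ 0`, and the intercept of that tangent is at most
`β(λ) θ(λ)`. Hence moving from `θ(λ)` by `(ψ(λ θ(λ)) + ε) / (β(λ) √n)` costs
`(ψ(λ θ(λ)) + ε) / √n`, of which the perturbation gives back at most `(ψ(λ θ(λ)) + ε / 2) / √n`,
provided that `λ θ(λ)` and `β(λ)` are bounded away from `0` and `θ(λ)` is bounded, uniformly in `n`.
If `s > 0` satisfies `λ₀ φ'(s) > 1`, concavity gives `λ θ(λ) ≥ s`, and the intercept of the tangent
at `λ θ(λ)` is at least the one at `s`, which is at least `s² E[X³ e^{-X s}] / 2`.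
The two bounds involve only `E[X² e^{-X s}]` and `E[X³ e^{-X s}]`, expectations of bounded
continuous functions of `X`, so convergence in distribution makes them uniform in `n`.
-/

/-- The set `{t > 0 : φ(λ t) - t < 0}` whose infimum is `θ(λ)`. -/
def negTimes (φ : ℝ → ℝ) (lam : ℝ) : Set ℝ := {t | 0 < t ∧ φ (lam * t) - t < 0}

/-- The right end `θ(λ)` of the excursion of `t ↦ φ(λ t) - t` above `0`. -/
noncomputable def excursionEnd (φ : ℝ → ℝ) (lam : ℝ) : ℝ := sInf (negTimes φ lam)

/-- The rate `β(λ) = 1 - λ φ'(λ θ(λ))` at which `t ↦ φ(λ t) - t` decreases at `θ(λ)`. The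
derivative `φ'` is a separate argument, to be given by a formula rather than by `deriv φ`. -/
noncomputable def excursionSlope (φ φ' : ℝ → ℝ) (lam : ℝ) : ℝ :=
  1 - lam * φ' (lam * excursionEnd φ lam)

/-- `φ` is nonnegative, increasing and concave on `[0, ∞)` with supergradient `φ'` on `(0, ∞)`:
concavity is expressed by the graph lying below the lines of slope `φ' u` through `(u, φ u)`. -/
structure IncreasingConcave (φ φ' : ℝ → ℝ) : Prop where
  map_zero_nonneg : 0 ≤ φ 0
  slope_nonneg : ∀ u > 0, 0 ≤ φ' u
  le_tangent : ∀ u > 0, ∀ v ≥ 0, φ v ≤ φ u + (v - u) * φ' u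

namespace IncreasingConcave

variable {φ φ' : ℝ → ℝ} {lam s M : ℝ}

lemma monotoneOn (h : IncreasingConcave φ φ') : MonotoneOn φ (Ici 0) := by
  intro u hu v _ huv
  rcases huv.eq_or_lt with rfl | hlt
  · rfl
  · have hv : 0 < v := lt_of_le_of_lt hu hlt
    have hdrop : (u - v) * φ' v ≤ 0 :=
      mul_nonpos_of_nonpos_of_nonneg (sub_nonpos.2 huv) (h.slope_nonneg v hv)
    linarith [h.le_tangent v hv u hu]

lemma slope_antitoneOn (h : IncreasingConcave φ φ') : AntitoneOn φ' (Ioi 0) := by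
  intro u hu v hv huv
  rcases huv.eq_or_lt with rfl | hlt
  · rfl
  · have hu' := h.le_tangent u hu v (le_of_lt hv)
    have hv' := h.le_tangent v hv u (le_of_lt hu)
    exact le_of_mul_le_mul_left (by linarith) (sub_pos.2 hlt)

lemma intercept_nonneg (h : IncreasingConcave φ φ') {u : ℝ} (hu : 0 < u) :
    0 ≤ φ u - u * φ' u := by
  linarith [h.map_zero_nonneg, h.le_tangent u hu 0 le_rfl]

lemma intercept_monotoneOn (h : IncreasingConcave φ φ') :
    MonotoneOn (fun u => φ u - u * φ' u) (Ioi 0) := by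
  intro s hs u hu hsu
  have hslope : s * φ' u ≤ s * φ' s :=
    mul_le_mul_of_nonneg_left (h.slope_antitoneOn hs hu hsu) (le_of_lt hs)
  linarith [h.le_tangent u hu s (le_of_lt hs)]

lemma le_mul_of_mem_negTimes (h : IncreasingConcave φ φ') (hlam : 0 < lam) (hs : 0 < s)
    (hslope : 1 ≤ lam * φ' s) {t : ℝ} (ht : t ∈ negTimes φ lam) : s ≤ lam * t := by
  obtain ⟨ht0, hneg⟩ := ht
  by_contra! hlt
  have hu : 0 < lam * t := mul_pos hlam ht0
  have : t ≤ φ (lam * t) := calc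
    t = t * 1 := (mul_one t).symm
    _ ≤ t * (lam * φ' s) := mul_le_mul_of_nonneg_left hslope ht0.le
    _ = lam * t * φ' s := by ring
    _ ≤ lam * t * φ' (lam * t) :=
      mul_le_mul_of_nonneg_left (h.slope_antitoneOn hu hs hlt.le) hu.le
    _ ≤ φ (lam * t) := sub_nonneg.1 (h.intercept_nonneg hu)
  linarith

lemma Ioi_subset_negTimes (h : IncreasingConcave φ φ') (hM : ∀ u ≥ 0, φ u ≤ M) (hlam : 0 ≤ lam) :
    Ioi M ⊆ negTimes φ lam := by
  intro t ht
  have ht0 : 0 < t := (h.map_zero_nonneg.trans (hM 0 le_rfl)).trans_lt ht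
  exact ⟨ht0, sub_neg.2 ((hM _ (mul_nonneg hlam ht0.le)).trans_lt ht)⟩

lemma excursionEnd_le (h : IncreasingConcave φ φ') (hM : ∀ u ≥ 0, φ u ≤ M) (hlam : 0 ≤ lam) :
    excursionEnd φ lam ≤ M :=
  (csInf_le_csInf ⟨0, fun _ ht => ht.1.le⟩ nonempty_Ioi (h.Ioi_subset_negTimes hM hlam)).trans_eq
    csInf_Ioi

lemma le_mul_excursionEnd (h : IncreasingConcave φ φ') (hM : ∀ u ≥ 0, φ u ≤ M) (hlam : 0 < lam)
    (hs : 0 < s) (hslope : 1 ≤ lam * φ' s) : s ≤ lam * excursionEnd φ lam := by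
  rw [← div_le_iff₀' hlam]
  refine le_csInf (nonempty_Ioi.mono (h.Ioi_subset_negTimes hM hlam.le)) fun t ht => ?_
  exact (div_le_iff₀' hlam).2 (h.le_mul_of_mem_negTimes hlam hs hslope ht)

lemma map_mul_excursionEnd_le (h : IncreasingConcave φ φ') (hM : ∀ u ≥ 0, φ u ≤ M)
    (hlam : 0 ≤ lam) : φ (lam * excursionEnd φ lam) ≤ excursionEnd φ lam := by
  have hne : (negTimes φ lam).Nonempty := nonempty_Ioi.mono (h.Ioi_subset_negTimes hM hlam)
  refine le_csInf hne fun t ht => ?_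
  have hle : excursionEnd φ lam ≤ t := csInf_le ⟨0, fun _ ht => ht.1.le⟩ ht
  have hnonneg : 0 ≤ excursionEnd φ lam := le_csInf hne fun _ ht => ht.1.le
  refine (h.monotoneOn (mul_nonneg hlam hnonneg) (mul_nonneg hlam ht.1.le)
    (mul_le_mul_of_nonneg_left hle hlam)).trans (sub_neg.1 ht.2).le

lemma sub_le_excursionSlope_mul (h : IncreasingConcave φ φ') (hM : ∀ u ≥ 0, φ u ≤ M)
    (hlam : 0 ≤ lam) (hpos : 0 < lam * excursionEnd φ lam) {t : ℝ} (ht : 0 ≤ lam * t) :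
    φ (lam * t) - t ≤ -(excursionSlope φ φ' lam * (t - excursionEnd φ lam)) := by
  have htangent := h.le_tangent _ hpos _ ht
  have hend := h.map_mul_excursionEnd_le hM hlam
  rw [excursionSlope]
  linarith

lemma intercept_le_excursionSlope_mul (h : IncreasingConcave φ φ') (hM : ∀ u ≥ 0, φ u ≤ M)
    (hlam : 0 ≤ lam) (hs : 0 < s) (hle : s ≤ lam * excursionEnd φ lam) :
    φ s - s * φ' s ≤ excursionSlope φ φ' lam * excursionEnd φ lam := by
  have hmono := h.intercept_monotoneOn hs (hs.trans_le hle) hle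
  have hend := h.map_mul_excursionEnd_le hM hlam
  rw [excursionSlope]
  linarith

lemma div_le_excursionSlope (h : IncreasingConcave φ φ') (hM : ∀ u ≥ 0, φ u ≤ M)
    (hlam : 0 < lam) (hs : 0 < s) (hle : s ≤ lam * excursionEnd φ lam) {c : ℝ} (hc : 0 < c)
    (hcs : c ≤ φ s - s * φ' s) : c / M ≤ excursionSlope φ φ' lam := by
  have hend : 0 < excursionEnd φ lam := pos_of_mul_pos_right (hs.trans_le hle) hlam.le
  have hprod := hcs.trans (h.intercept_le_excursionSlope_mul hM hlam.le hs hle)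
  have hslope : 0 < excursionSlope φ φ' lam := pos_of_mul_pos_left (hc.trans_le hprod) hend.le
  have hendM : excursionEnd φ lam ≤ M := h.excursionEnd_le hM hlam.le
  exact (div_le_iff₀ (hend.trans_le hendM)).2
    (hprod.trans (mul_le_mul_of_nonneg_left hendM hslope.le))

end IncreasingConcave

lemma pow_mul_exp_neg_le {x u : ℝ} (hx : 0 ≤ x) (hu : 0 < u) (k : ℕ) :
    x ^ k * Real.exp (-x * u) ≤ k.factorial / u ^ k := by
  have hexp := Real.pow_div_factorial_le_exp (x * u) (mul_nonneg hx hu.le) k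
  rw [div_le_iff₀ (by positivity), mul_pow] at hexp
  rw [neg_mul, Real.exp_neg, ← div_eq_mul_inv, div_le_div_iff₀ (by positivity) (by positivity)]
  linarith

lemma mul_one_sub_exp_le_tangent {x : ℝ} (hx : 0 ≤ x) (u v : ℝ) :
    x * (1 - Real.exp (-x * v)) ≤
      x * (1 - Real.exp (-x * u)) + (v - u) * (x ^ 2 * Real.exp (-x * u)) := by
  have hsplit : Real.exp (-x * v) = Real.exp (-x * u) * Real.exp (-x * (v - u)) := by
    rw [← Real.exp_add]; ring_nf
  have hexp := mul_le_mul_of_nonneg_left (Real.add_one_le_exp (-x * (v - u)))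
    (mul_nonneg hx (Real.exp_nonneg (-x * u)))
  rw [hsplit]
  linarith

lemma pow_three_mul_exp_le_intercept {x s : ℝ} (hx : 0 ≤ x) (hs : 0 ≤ s) :
    s ^ 2 / 2 * (x ^ 3 * Real.exp (-x * s)) ≤
      x * (1 - Real.exp (-x * s)) - s * (x ^ 2 * Real.exp (-x * s)) := by
  have hexp := mul_le_mul_of_nonneg_left (Real.quadratic_le_exp_of_nonneg (mul_nonneg hx hs))
    (mul_nonneg hx (Real.exp_nonneg (-x * s)))
  have hinv : Real.exp (-x * s) * Real.exp (x * s) = 1 := by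
    rw [← Real.exp_add, neg_mul, neg_add_cancel, Real.exp_zero]
  rw [mul_assoc x (Real.exp (-x * s)) (Real.exp (x * s)), hinv] at hexp
  linarith

section TiltedMoment

variable {Ω : Type*} [MeasurableSpace Ω] {P : Measure Ω} {X : Ω → ℝ}

/-- The function `φ₁(t) = E[X (1 - e^{-X t})]`. -/
noncomputable def sizeBiasedLaplace (P : Measure Ω) (X : Ω → ℝ) (t : ℝ) : ℝ :=
  ∫ ω, X ω * (1 - Real.exp (-(X ω) * t)) ∂P

/-- The exponentially tilted moment `E[Xᵏ e^{-X u}]`; for `k = 2` it is the derivative of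
`sizeBiasedLaplace P X` at `u > 0`, for `X ≥ 0` integrable. -/
noncomputable def tiltedMoment (P : Measure Ω) (X : Ω → ℝ) (k : ℕ) (u : ℝ) : ℝ :=
  ∫ ω, X ω ^ k * Real.exp (-(X ω) * u) ∂P

lemma tiltedMoment_nonneg (hX0 : 0 ≤ᵐ[P] X) (k : ℕ) (u : ℝ) : 0 ≤ tiltedMoment P X k u :=
  integral_nonneg_of_ae <| hX0.mono fun _ hω => mul_nonneg (pow_nonneg hω k) (Real.exp_nonneg _)

lemma tiltedMoment_abs (hX0 : 0 ≤ᵐ[P] X) (k : ℕ) (u : ℝ) :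
    tiltedMoment P |X| k u = tiltedMoment P X k u :=
  integral_congr_ae <| hX0.mono fun ω hω => by simp only [Pi.abs_apply, abs_of_nonneg hω]

lemma integrable_mul_one_sub_exp (hX0 : 0 ≤ᵐ[P] X) (hX : Integrable X P) {t : ℝ} (ht : 0 ≤ t) :
    Integrable (fun ω => X ω * (1 - Real.exp (-(X ω) * t))) P := by
  have hm : AEMeasurable X P := hX.aemeasurable
  refine hX.mono (by fun_prop) (hX0.mono fun ω hω => ?_)
  have hexp : Real.exp (-(X ω) * t) ≤ 1 :=
    Real.exp_le_one_iff.2 (mul_nonpos_of_nonpos_of_nonneg (neg_nonpos.2 hω) ht)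
  rw [norm_mul, Real.norm_of_nonneg (sub_nonneg.2 hexp)]
  exact mul_le_of_le_one_right (norm_nonneg _) (sub_le_self _ (Real.exp_nonneg _))

lemma integrable_pow_succ_mul_exp (hX0 : 0 ≤ᵐ[P] X) (hX : Integrable X P) {u : ℝ} (hu : 0 < u)
    (k : ℕ) : Integrable (fun ω => X ω ^ (k + 1) * Real.exp (-(X ω) * u)) P := by
  have hm : AEMeasurable X P := hX.aemeasurable
  refine (hX.mul_const (k.factorial / u ^ k)).mono' (by fun_prop) (hX0.mono fun ω hω => ?_)
  rw [Real.norm_of_nonneg (mul_nonneg (pow_nonneg hω _) (Real.exp_nonneg _)), pow_succ', mul_assoc]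
  exact mul_le_mul_of_nonneg_left (pow_mul_exp_neg_le hω hu k) hω

lemma increasingConcave_sizeBiasedLaplace (hX0 : 0 ≤ᵐ[P] X) (hX : Integrable X P) :
    IncreasingConcave (sizeBiasedLaplace P X) (tiltedMoment P X 2) where
  map_zero_nonneg := by simp [sizeBiasedLaplace]
  slope_nonneg u _ := tiltedMoment_nonneg hX0 2 u
  le_tangent u hu v hv := by
    have hφ := integrable_mul_one_sub_exp hX0 hX hu.le
    have hslope := (integrable_pow_succ_mul_exp hX0 hX hu 1).const_mul (v - u)
    rw [sizeBiasedLaplace, sizeBiasedLaplace, tiltedMoment, ← integral_const_mul,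
      ← integral_add hφ hslope]
    exact integral_mono_ae (integrable_mul_one_sub_exp hX0 hX hv) (hφ.add hslope)
      (hX0.mono fun ω hω => mul_one_sub_exp_le_tangent hω u v)

lemma sizeBiasedLaplace_le_integral (hX0 : 0 ≤ᵐ[P] X) (hX : Integrable X P) {t : ℝ}
    (ht : 0 ≤ t) : sizeBiasedLaplace P X t ≤ ∫ ω, X ω ∂P :=
  integral_mono_ae (integrable_mul_one_sub_exp hX0 hX ht) hX <| hX0.mono fun _ hω =>
    mul_le_of_le_one_right hω (sub_le_self _ (Real.exp_nonneg _))

lemma tiltedMoment_three_le_intercept (hX0 : 0 ≤ᵐ[P] X) (hX : Integrable X P) {s : ℝ}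
    (hs : 0 < s) :
    s ^ 2 / 2 * tiltedMoment P X 3 s ≤ sizeBiasedLaplace P X s - s * tiltedMoment P X 2 s := by
  have hφ := integrable_mul_one_sub_exp hX0 hX hs.le
  have hslope := (integrable_pow_succ_mul_exp hX0 hX hs 1).const_mul s
  rw [sizeBiasedLaplace, tiltedMoment, tiltedMoment, ← integral_const_mul, ← integral_const_mul,
    ← integral_sub hφ hslope]
  exact integral_mono_ae ((integrable_pow_succ_mul_exp hX0 hX hs 2).const_mul _) (hφ.sub hslope)
    (hX0.mono fun ω hω => pow_three_mul_exp_le_intercept hω hs.le)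

lemma tendsto_tiltedMoment_zero {k : ℕ} (hm : AEMeasurable X P) (hX0 : 0 ≤ᵐ[P] X)
    (hXk : Integrable (fun ω => X ω ^ k) P) :
    Tendsto (tiltedMoment P X k) (𝓝[>] 0) (𝓝 (∫ ω, X ω ^ k ∂P)) := by
  refine tendsto_integral_filter_of_dominated_convergence (fun ω => X ω ^ k)
    (.of_forall fun s => by fun_prop) ?_ hXk (.of_forall fun ω => ?_)
  · filter_upwards [self_mem_nhdsWithin] with s hs
    refine hX0.mono fun ω hω => ?_
    have hexp : Real.exp (-(X ω) * s) ≤ 1 :=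
      Real.exp_le_one_iff.2 (mul_nonpos_of_nonpos_of_nonneg (neg_nonpos.2 hω) (le_of_lt hs))
    rw [Real.norm_of_nonneg (mul_nonneg (pow_nonneg hω _) (Real.exp_nonneg _))]
    exact mul_le_of_le_one_right (pow_nonneg hω _) hexp
  · have hcont : Continuous fun s : ℝ => X ω ^ k * Real.exp (-(X ω) * s) := by fun_prop
    simpa using (hcont.tendsto 0).mono_left nhdsWithin_le_nhds

lemma exists_pos_lt_mul_tiltedMoment {k : ℕ} (hm : AEMeasurable X P) (hX0 : 0 ≤ᵐ[P] X)
    (hXk : Integrable (fun ω => X ω ^ k) P) {c l : ℝ} (hl : c < l * ∫ ω, X ω ^ k ∂P) :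
    ∃ s > 0, c < l * tiltedMoment P X k s := by
  have hlim := (tendsto_tiltedMoment_zero hm hX0 hXk).const_mul l
  obtain ⟨s, hcs, hs⟩ := ((hlim.eventually (lt_mem_nhds hl)).and self_mem_nhdsWithin).exists
  exact ⟨s, hs, hcs⟩

lemma tiltedMoment_pos [IsFiniteMeasure P] (hm : AEMeasurable X P) (hX0 : 0 ≤ᵐ[P] X)
    (hne : ¬ X =ᵐ[P] 0) {s : ℝ} (hs : 0 < s) (k : ℕ) : 0 < tiltedMoment P X k s := by
  have hnonneg : 0 ≤ᵐ[P] fun ω => X ω ^ k * Real.exp (-(X ω) * s) :=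
    hX0.mono fun ω hω => mul_nonneg (pow_nonneg hω _) (Real.exp_nonneg _)
  have hint : Integrable (fun ω => X ω ^ k * Real.exp (-(X ω) * s)) P := by
    refine (integrable_const (k.factorial / s ^ k : ℝ)).mono' (by fun_prop) ?_
    filter_upwards [hX0, hnonneg] with ω hω hterm
    rw [Real.norm_of_nonneg hterm]
    exact pow_mul_exp_neg_le hω hs k
  refine (tiltedMoment_nonneg hX0 k s).lt_of_ne' fun hzero => hne ?_
  filter_upwards [(integral_eq_zero_iff_of_nonneg_ae hnonneg hint).1 hzero] with ω hω
  exact eq_zero_of_pow_eq_zero ((mul_eq_zero.1 hω).resolve_right (Real.exp_pos _).ne')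

end TiltedMoment

section SecondMoment

variable {Ω : Type*} [MeasurableSpace Ω] {P : Measure Ω} {X : Ω → ℝ}

lemma integrable_of_integrable_sq [IsFiniteMeasure P] (hm : AEStronglyMeasurable X P)
    (hX2 : Integrable (fun ω => X ω ^ 2) P) : Integrable X P :=
  ((memLp_two_iff_integrable_sq hm).2 hX2).integrable one_le_two

lemma integral_le_integral_sq_add_one [IsProbabilityMeasure P] (hm : AEStronglyMeasurable X P)
    (hX2 : Integrable (fun ω => X ω ^ 2) P) : ∫ ω, X ω ∂P ≤ ∫ ω, X ω ^ 2 ∂P + 1 := calc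
  ∫ ω, X ω ∂P ≤ ∫ ω, (X ω ^ 2 + 1) ∂P :=
    integral_mono (integrable_of_integrable_sq hm hX2) (hX2.add (integrable_const 1)) fun ω => by
      dsimp only
      nlinarith [sq_nonneg (2 * X ω - 1)]
  _ = ∫ ω, X ω ^ 2 ∂P + 1 := by
    rw [integral_add hX2 (integrable_const 1), integral_const, probReal_univ, one_smul]

lemma integral_sq_pos (hne : ¬ X =ᵐ[P] 0) (hX2 : Integrable (fun ω => X ω ^ 2) P) :
    0 < ∫ ω, X ω ^ 2 ∂P := by
  refine (integral_nonneg fun ω => sq_nonneg (X ω)).lt_of_ne' fun hzero => hne ?_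
  filter_upwards [(integral_eq_zero_iff_of_nonneg (fun ω => sq_nonneg (X ω)) hX2).1 hzero] with ω hω
  exact eq_zero_of_pow_eq_zero hω

lemma pos_of_one_lt_mul_integral_sq {l : ℝ} (hl : 1 < l * ∫ ω, X ω ^ 2 ∂P) : 0 < l :=
  pos_of_mul_pos_left (one_pos.trans hl) (integral_nonneg fun ω => sq_nonneg (X ω))

end SecondMoment

section ConvergenceInDistribution

variable {ι : Type*} {l : Filter ι} {Ω : ι → Type*} [∀ i, MeasurableSpace (Ω i)]
  {P : ∀ i, Measure (Ω i)} [∀ i, IsProbabilityMeasure (P i)]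
  {Ω' : Type*} [MeasurableSpace Ω'] {P' : Measure Ω'} [IsProbabilityMeasure P']

lemma tendstoInDistribution_iff_forall_integral_tendsto {E : Type*} [TopologicalSpace E]
    [MeasurableSpace E] [OpensMeasurableSpace E] {X : ∀ i, Ω i → E} {Z : Ω' → E}
    (hX : ∀ i, AEMeasurable (X i) (P i)) (hZ : AEMeasurable Z P') :
    TendstoInDistribution X l Z P P' ↔ ∀ f : BoundedContinuousFunction E ℝ,
      Tendsto (fun i => ∫ ω, f (X i ω) ∂(P i)) l (𝓝 (∫ ω, f (Z ω) ∂P')) := by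
  have hmapX (i : ι) (f : BoundedContinuousFunction E ℝ) :
      ∫ x, f x ∂((P i).map (X i)) = ∫ ω, f (X i ω) ∂(P i) :=
    integral_map (hX i) f.continuous.measurable.aestronglyMeasurable
  have hmapZ (f : BoundedContinuousFunction E ℝ) :
      ∫ x, f x ∂(P'.map Z) = ∫ ω, f (Z ω) ∂P' :=
    integral_map hZ f.continuous.measurable.aestronglyMeasurable
  simp only [← hmapX, ← hmapZ]
  exact ⟨fun h => ProbabilityMeasure.tendsto_iff_forall_integral_tendsto.1 h.tendsto,
    fun h => ⟨hX, hZ, ProbabilityMeasure.tendsto_iff_forall_integral_tendsto.2 h⟩⟩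

lemma tendsto_tiltedMoment_abs {X : ∀ i, Ω i → ℝ} {Z : Ω' → ℝ}
    (h : TendstoInDistribution X l Z P P') (k : ℕ) {s : ℝ} (hs : 0 < s) :
    Tendsto (fun i => tiltedMoment (P i) |X i| k s) l (𝓝 (tiltedMoment P' |Z| k s)) := by
  have hbdd (w : ℝ) : ‖|w| ^ k * Real.exp (-|w| * s)‖ ≤ k.factorial / s ^ k := by
    rw [Real.norm_of_nonneg (by positivity)]
    exact pow_mul_exp_neg_le (abs_nonneg w) hs k
  exact (tendstoInDistribution_iff_forall_integral_tendsto h.forall_aemeasurable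
    h.aemeasurable_limit).1 h (.ofNormedAddCommGroup _ (by fun_prop) _ hbdd)

end ConvergenceInDistribution

section Perturbation

variable {ψ : ℝ → ℝ} {s : ℝ}

/-- The perturbed process `H(t, λ) = (φ(λ t) - t) + a⁻¹ ψ(λ t) + Δ(λ t)`, where `a` plays the role
of `√n`. -/
noncomputable def perturbedExcursion (φ ψ Δ : ℝ → ℝ) (a t lam : ℝ) : ℝ :=
  (φ (lam * t) - t) + a⁻¹ * ψ (lam * t) + Δ (lam * t)

lemma eventually_forall_shift (hψ : ContinuousOn ψ (Ici 0)) (hs : 0 < s) (K R : ℝ) {η : ℝ}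
    (hη : 0 < η) : ∀ᶠ a in atTop, ∀ u ∈ Icc s K, ∀ d, |d| * a ≤ R →
      u + d ∈ Icc 0 (K + 1) ∧ |ψ (u + d) - ψ u| < η := by
  have huc : UniformContinuousOn ψ (Icc 0 (K + 1)) :=
    isCompact_Icc.uniformContinuousOn_of_continuous (hψ.mono Icc_subset_Ici_self)
  obtain ⟨δ, hδ, hclose⟩ := Metric.uniformContinuousOn_iff.1 huc η hη
  set r := min δ (min s 1)
  have hr : 0 < r := lt_min hδ (lt_min hs one_pos)
  filter_upwards [eventually_gt_atTop 0, eventually_gt_atTop (R / r)] with a ha haR u hu d hd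
  have hdr : |d| < r := lt_of_mul_lt_mul_right (hd.trans_lt ((div_lt_iff₀' hr).1 haR)) ha.le
  obtain ⟨hdδ, hds, hd1⟩ : |d| < δ ∧ |d| < s ∧ |d| < 1 := by simpa only [r, lt_min_iff] using hdr
  have hmem : u + d ∈ Icc 0 (K + 1) :=
    ⟨by linarith [hu.1, neg_abs_le d], by linarith [hu.2, le_abs_self d]⟩
  have hu' : u ∈ Icc 0 (K + 1) := ⟨hs.le.trans hu.1, by linarith [hu.2]⟩
  exact ⟨hmem, hclose _ hmem _ hu' (by rwa [Real.dist_eq, add_sub_cancel_left])⟩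

lemma eventually_forall_step (hψ : ContinuousOn ψ (Ici 0)) (hs : 0 < s) (K lam1 : ℝ) {b η : ℝ}
    (hb : 0 < b) (ε : ℝ) (hη : 0 < η) : ∀ᶠ a in atTop, ∀ lam ∈ Icc 0 lam1, ∀ θ β : ℝ,
      lam * θ ∈ Icc s K → b ≤ β →
        lam * (θ + (ψ (lam * θ) + ε) / (β * a)) ∈ Icc 0 (K + 1) ∧
        |ψ (lam * (θ + (ψ (lam * θ) + ε) / (β * a))) - ψ (lam * θ)| < η := by
  have hcont : ContinuousOn (fun u => ψ u + ε) (Icc s K) :=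
    (hψ.mono (Icc_subset_Ici_self.trans (Ici_subset_Ici.2 hs.le))).add continuousOn_const
  obtain ⟨B, hB⟩ := isCompact_Icc.exists_bound_of_continuousOn hcont
  filter_upwards [eventually_gt_atTop 0, eventually_forall_shift hψ hs K (lam1 * (B / b)) hη]
    with a ha hshift lam hlam θ β hu hβ
  have hβ0 : 0 < β := hb.trans_le hβ
  have hjump : |ψ (lam * θ) + ε| ≤ B := hB _ hu
  rw [mul_add]
  refine hshift _ hu _ ?_
  calc |lam * ((ψ (lam * θ) + ε) / (β * a))| * a
      = lam * (|ψ (lam * θ) + ε| / β) := by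
        rw [abs_mul, abs_div, abs_of_nonneg hlam.1, abs_of_pos (mul_pos hβ0 ha)]
        field_simp
    _ ≤ lam1 * (B / b) :=
        mul_le_mul hlam.2 (div_le_div₀ ((abs_nonneg _).trans hjump) hjump hb hβ)
          (by positivity) (hlam.1.trans hlam.2)

lemma perturbedExcursion_step_le {φ Δ : ℝ → ℝ} {a θ β p t lam ε : ℝ} (ha : 0 < a) (hβ : 0 < β)
    (ht : t = θ + (p + ε) / (β * a)) (hφ : φ (lam * t) - t ≤ -(β * (t - θ)))
    (hψ : |ψ (lam * t) - p| < ε / 4) (hΔ : |a * Δ (lam * t)| < ε / 4) :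
    perturbedExcursion φ ψ Δ a t lam ≤ -ε / (2 * a) := by
  have hdrop : a * (β * (t - θ)) = p + ε := by rw [ht]; field_simp; ring
  have hscaled : a * (φ (lam * t) - t) ≤ -(p + ε) := by
    linarith [mul_le_mul_of_nonneg_left hφ ha.le]
  have hsum : a * perturbedExcursion φ ψ Δ a t lam =
      a * (φ (lam * t) - t) + ψ (lam * t) + a * Δ (lam * t) := by
    rw [perturbedExcursion]; field_simp
  rw [← div_div, le_div_iff₀' ha, hsum]
  linarith [(abs_lt.1 hψ).2, (abs_lt.1 hΔ).2]

end Perturbation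

section Supercritical

variable {ι : Type*} {l : Filter ι} {Ω : ι → Type*} [∀ i, MeasurableSpace (Ω i)]
  {P : ∀ i, Measure (Ω i)} [∀ i, IsProbabilityMeasure (P i)]
  {Ω' : Type*} [MeasurableSpace Ω'] {P' : Measure Ω'} [IsProbabilityMeasure P']
  {X : ∀ i, Ω i → ℝ} {W : Ω' → ℝ} {lam0 : ℝ}

lemma exists_eventually_tiltedMoment_lower_bounds (hXW : TendstoInDistribution X l W P P')
    (hX0 : ∀ i, 0 ≤ᵐ[P i] X i) (hlam0 : 1 < lam0 * ∫ ω, W ω ^ 2 ∂P') :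
    ∃ s > 0, ∃ m > 0, ∀ᶠ i in l,
      1 < lam0 * tiltedMoment (P i) (X i) 2 s ∧ m < tiltedMoment (P i) (X i) 3 s := by
  have habs0 : 0 ≤ᵐ[P'] |W| := .of_forall fun ω => abs_nonneg (W ω)
  have habs : AEMeasurable |W| P' := hXW.aemeasurable_limit.abs
  have hsq : ∫ ω, W ω ^ 2 ∂P' ≠ 0 := fun hzero => by norm_num [hzero] at hlam0
  have hW2 : Integrable (fun ω => W ω ^ 2) P' := not_imp_comm.1 integral_undef hsq
  have hne : ¬ |W| =ᵐ[P'] 0 := fun hzero => hsq <| integral_eq_zero_of_ae <|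
    hzero.mono fun ω hω => by simpa using hω
  obtain ⟨s, hs, hlam0s⟩ := exists_pos_lt_mul_tiltedMoment (X := |W|) (k := 2) habs habs0
    (by simpa only [Pi.abs_apply, sq_abs] using hW2)
    (by simpa only [Pi.abs_apply, sq_abs] using hlam0)
  have hm : 0 < tiltedMoment P' |W| 3 s := tiltedMoment_pos habs habs0 hne hs 3
  refine ⟨s, hs, _, half_pos hm, ?_⟩
  filter_upwards [((tendsto_tiltedMoment_abs hXW 2 hs).const_mul lam0).eventually
      (lt_mem_nhds hlam0s),
    (tendsto_tiltedMoment_abs hXW 3 hs).eventually (lt_mem_nhds (half_lt_self hm))] with i h2 h3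
  rw [tiltedMoment_abs (hX0 i)] at h2 h3
  exact ⟨h2, h3⟩

lemma exists_eventually_excursion_lower_bounds (hXW : TendstoInDistribution X l W P P')
    (hX0 : ∀ i, 0 ≤ᵐ[P i] X i) (hX : ∀ i, Integrable (X i) (P i)) {M : ℝ} (hM0 : 0 < M)
    (hM : ∀ᶠ i in l, ∫ ω, X i ω ∂(P i) ≤ M) (hlam0 : 1 < lam0 * ∫ ω, W ω ^ 2 ∂P') :
    ∃ s > 0, ∃ b > 0, ∀ᶠ i in l, ∀ lam ≥ lam0,
      s ≤ lam * excursionEnd (sizeBiasedLaplace (P i) (X i)) lam ∧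
      b ≤ excursionSlope (sizeBiasedLaplace (P i) (X i)) (tiltedMoment (P i) (X i) 2) lam := by
  obtain ⟨s, hs, m, hm, hlower⟩ := exists_eventually_tiltedMoment_lower_bounds hXW hX0 hlam0
  refine ⟨s, hs, s ^ 2 / 2 * m / M, by positivity, ?_⟩
  filter_upwards [hlower, hM] with i ⟨h2, h3⟩ hMi lam hlam
  have hpos : 0 < lam := (pos_of_one_lt_mul_integral_sq hlam0).trans_le hlam
  have hconcave := increasingConcave_sizeBiasedLaplace (hX0 i) (hX i)
  have hbdd (u : ℝ) (hu : u ≥ 0) : sizeBiasedLaplace (P i) (X i) u ≤ M :=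
    (sizeBiasedLaplace_le_integral (hX0 i) (hX i) hu).trans hMi
  have hslope : 1 ≤ lam * tiltedMoment (P i) (X i) 2 s :=
    h2.le.trans (mul_le_mul_of_nonneg_right hlam (tiltedMoment_nonneg (hX0 i) 2 s))
  have hend := hconcave.le_mul_excursionEnd hbdd hpos hs hslope
  have hintercept := (mul_le_mul_of_nonneg_left h3.le (by positivity : 0 ≤ s ^ 2 / 2)).trans
    (tiltedMoment_three_le_intercept (hX0 i) (hX i) hs)
  exact ⟨hend, hconcave.div_le_excursionSlope hbdd hpos hs hend (by positivity) hintercept⟩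

theorem stmt_2_general (hXW : TendstoInDistribution X l W P P')
    (hX0 : ∀ i, 0 ≤ᵐ[P i] X i) (hX : ∀ i, Integrable (X i) (P i))
    (hbdd : IsBoundedUnder (· ≤ ·) l fun i => ∫ ω, X i ω ∂(P i))
    {ψ : ℝ → ℝ} (hψ : ContinuousOn ψ (Ici 0)) {a : ι → ℝ} (ha : Tendsto a l atTop)
    {Δ : ι → ℝ → ℝ}
    (hΔ : ∀ K > 0, TendstoUniformlyOn (fun i s => a i * Δ i s) (fun _ => 0) l (Icc 0 K))
    (hlam0 : 1 < lam0 * ∫ ω, W ω ^ 2 ∂P') (lam1 : ℝ) {ε : ℝ} (hε : 0 < ε) :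
    ∀ᶠ i in l, ∀ lam ∈ Icc lam0 lam1,
      let φ := sizeBiasedLaplace (P i) (X i)
      let θ := excursionEnd φ lam
      let β := excursionSlope φ (tiltedMoment (P i) (X i) 2) lam
      perturbedExcursion φ ψ (Δ i) (a i) (θ + (ψ (lam * θ) + ε) / (β * a i)) lam ≤
        -ε / (2 * a i) := by
  obtain ⟨M, hM⟩ := hbdd.eventually_le
  have hM' : ∀ᶠ i in l, ∫ ω, X i ω ∂(P i) ≤ max M 1 :=
    hM.mono fun i hi => hi.trans (le_max_left M 1)
  obtain ⟨s, hs, b, hb, hlower⟩ := exists_eventually_excursion_lower_bounds hXW hX0 hX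
    (lt_max_of_lt_right one_pos) hM' hlam0
  have hK : 0 < |lam1| * max M 1 + 1 := by positivity
  have hΔε := Metric.tendstoUniformlyOn_iff.1 (hΔ _ hK) (ε / 4) (by positivity)
  filter_upwards [hM', hlower, hΔε, ha.eventually_gt_atTop 0,
    ha.eventually (eventually_forall_step hψ hs (|lam1| * max M 1) lam1 hb ε
      (by positivity : 0 < ε / 4))] with i hMi hlow hΔi hai hstep lam hlam φ θ β
  have hpos : 0 < lam := (pos_of_one_lt_mul_integral_sq hlam0).trans_le hlam.1
  have hconcave := increasingConcave_sizeBiasedLaplace (hX0 i) (hX i)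
  have hφM (u : ℝ) (hu : u ≥ 0) : φ u ≤ max M 1 :=
    (sizeBiasedLaplace_le_integral (hX0 i) (hX i) hu).trans hMi
  obtain ⟨hsθ, hbβ⟩ := hlow lam hlam.1
  have hθK : lam * θ ≤ |lam1| * max M 1 :=
    mul_le_mul (hlam.2.trans (le_abs_self _)) (hconcave.excursionEnd_le hφM hpos.le)
      (pos_of_mul_pos_right (hs.trans_le hsθ) hpos.le).le (abs_nonneg _)
  obtain ⟨hmem, hψε⟩ := hstep lam ⟨hpos.le, hlam.2⟩ θ β ⟨hsθ, hθK⟩ hbβ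
  refine perturbedExcursion_step_le hai (hb.trans_le hbβ) rfl
    (hconcave.sub_le_excursionSlope_mul hφM hpos.le (hs.trans_le hsθ) hmem.1) hψε ?_
  simpa only [dist_zero_left, Real.norm_eq_abs] using hΔi _ hmem

end Supercritical

/-- Lemma 3.3, first display (deterministic content): just past the right edge of the
giant's excursion, `H_n` is at most `-ε/(2√n)`, uniformly over `λ ∈ [λ₀, λ₁]`. -/
theorem stmt_2
    {Ω : Type*} [MeasurableSpace Ω] (P : Measure Ω) [IsProbabilityMeasure P]
    (W : Ω → ℝ) (Wn : ℕ → Ω → ℝ)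
    (hWmeas : Measurable W) (hWnmeas : ∀ n, Measurable (Wn n))
    (hWpos : ∀ᵐ ω ∂P, 0 < W ω) (hWnpos : ∀ n, ∀ᵐ ω ∂P, 0 < Wn n ω)
    -- convergence in distribution of `Wₙ` to `W`
    (hdist : ∀ f : BoundedContinuousFunction ℝ ℝ,
      Tendsto (fun n => ∫ ω, f (Wn n ω) ∂P) atTop (𝓝 (∫ ω, f (W ω) ∂P)))
    -- second moments are finite and converge
    (hW2 : Integrable (fun ω => (W ω) ^ 2) P)
    (hWn2 : ∀ n, Integrable (fun ω => (Wn n ω) ^ 2) P)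
    (hmom : Tendsto (fun n => ∫ ω, (Wn n ω) ^ 2 ∂P) atTop (𝓝 (∫ ω, (W ω) ^ 2 ∂P)))
    -- `λ_crit = 1 / E[W²]`
    (lamCrit : ℝ) (hlamCrit : lamCrit = (∫ ω, (W ω) ^ 2 ∂P)⁻¹)
    -- `φ₁⁽ⁿ⁾(t) = E[Wₙ (1 - e^{-Wₙ t})]`
    (φ1n : ℕ → ℝ → ℝ)
    (hφ1n : ∀ n t, φ1n n t = ∫ ω, Wn n ω * (1 - Real.exp (-(Wn n ω) * t)) ∂P)
    -- `θ⁽ⁿ⁾(λ) = inf {t > 0 : φ₁⁽ⁿ⁾(λ t) - t < 0}`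
    (θn : ℕ → ℝ → ℝ)
    (hθn : ∀ n lam, θn n lam = sInf {t : ℝ | 0 < t ∧ φ1n n (lam * t) - t < 0})
    -- `β⁽ⁿ⁾(λ) = 1 - λ E[Wₙ² e^{-Wₙ λ θ⁽ⁿ⁾(λ)}]`
    (βn : ℕ → ℝ → ℝ)
    (hβn : ∀ n lam, βn n lam =
      1 - lam * ∫ ω, (Wn n ω) ^ 2 * Real.exp (-(Wn n ω) * (lam * θn n lam)) ∂P)
    -- `ψ` continuous with `ψ(0) = 0`
    (ψ : ℝ → ℝ) (hψcont : Continuous ψ) (hψ0 : ψ 0 = 0)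
    -- `√n · sup_{0 ≤ s ≤ K} |Δₙ(s)| → 0` for every `K > 0`
    (Δ : ℕ → ℝ → ℝ)
    (hΔ : ∀ K > (0:ℝ),
      TendstoUniformlyOn (fun (n : ℕ) s => Real.sqrt n * Δ n s) (fun _ => 0) atTop (Icc 0 K))
    -- `Hₙ(t, λ) = (φ₁⁽ⁿ⁾(λ t) - t) + n^{-1/2} ψ(λ t) + Δₙ(λ t)`
    (H : ℕ → ℝ → ℝ → ℝ)
    (hH : ∀ n t lam, H n t lam =
      (φ1n n (lam * t) - t) + (Real.sqrt n)⁻¹ * ψ (lam * t) + Δ n (lam * t)) :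
    ∀ lam0 lam1 : ℝ, lamCrit < lam0 → lam0 ≤ lam1 → ∀ ε > (0:ℝ),
      ∃ N : ℕ, ∀ n ≥ N, ∀ lam ∈ Icc lam0 lam1,
        H n (θn n lam + (ψ (lam * θn n lam) + ε) / (βn n lam * Real.sqrt n)) lam ≤
          -ε / (2 * Real.sqrt n) := by
  intro lam0 lam1 hlam0 _ ε hε
  obtain rfl : φ1n = fun n => sizeBiasedLaplace P (Wn n) := funext₂ hφ1n
  obtain rfl : θn = fun n => excursionEnd (sizeBiasedLaplace P (Wn n)) := funext₂ hθn
  obtain rfl : βn = fun n =>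
      excursionSlope (sizeBiasedLaplace P (Wn n)) (tiltedMoment P (Wn n) 2) := funext₂ hβn
  have hne : ¬ W =ᵐ[P] 0 := fun hzero =>
    (hWpos.and hzero).exists.elim fun ω hω => hω.1.ne' hω.2
  have hsup : 1 < lam0 * ∫ ω, W ω ^ 2 ∂P :=
    (inv_lt_iff_one_lt_mul₀ (integral_sq_pos hne hW2)).1 (hlamCrit ▸ hlam0)
  have hWnW : TendstoInDistribution Wn atTop W (fun _ => P) P :=
    (tendstoInDistribution_iff_forall_integral_tendsto (fun n => (hWnmeas n).aemeasurable)
      hWmeas.aemeasurable).2 hdist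
  have hmean : IsBoundedUnder (· ≤ ·) atTop fun n => ∫ ω, Wn n ω ∂P :=
    (hmom.add_const 1).isBoundedUnder_le.mono_le <| .of_forall fun n =>
      integral_le_integral_sq_add_one (hWnmeas n).aestronglyMeasurable (hWn2 n)
  simp only [hH]
  exact eventually_atTop.1 <| stmt_2_general hWnW (fun n => (hWnpos n).mono fun _ => le_of_lt)
    (fun n => integrable_of_integrable_sq (hWnmeas n).aestronglyMeasurable (hWn2 n)) hmean
    hψcont.continuousOn (Real.tendsto_sqrt_atTop.comp tendsto_natCast_atTop_atTop) hΔ hsup lam1 hε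
end

section
/- sup_{λ > λ_crit} |θ^{(n)}(λ) − θ(λ)| → 0 as n → ∞. -/
open MeasureTheory Filter Topology Set

/-!
Write `θ(λ)` as the point where `ψ(t) = φ₁(λt)` crosses the diagonal. The quotient `ψ(t)/t` is
antitone, strictly so where `ψ` is positive, hence `ψ(t) < t` to the right of the crossing and
`t < ψ(t)` to the left of it, and these strict inequalities survive small perturbations of `ψ`. So
pointwise convergence of the functions forces convergence of their crossings. Applied to
`φ₁⁽ⁿ⁾(λ·) → φ₁(λ·)` this gives `θ⁽ⁿ⁾(λ) → θ(λ)`; applied to `φ₁(κ·) → φ₁(λ·)` as `κ → λ` it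
gives continuity of `θ`; applied to `φ₁(λ·) → 𝔼[W]` it gives `θ(λ) → 𝔼[W]` as `λ → ∞`. Since each
`θ⁽ⁿ⁾` is monotone and bounded by `𝔼[Wₙ] → 𝔼[W]`, a Pólya-type argument makes the convergence
uniform.
-/

open scoped NNReal

section MonotoneFunctions

variable {α ι : Type*} [LinearOrder α] [TopologicalSpace α] [OrderTopology α]
  {l : Filter ι} {F : ι → α → ℝ} {f : α → ℝ}

theorem tendstoLocallyUniformly_of_monotone (hF : ∀ i, Monotone (F i)) (hf : Continuous f)
    (hlim : ∀ x, Tendsto (F · x) l (𝓝 (f x))) : TendstoLocallyUniformly F f l := by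
  rw [Metric.tendstoLocallyUniformly_iff]
  intro ε hε x
  have near : ∀ᶠ y in 𝓝 x, dist (f y) (f x) < ε / 3 :=
    Metric.tendsto_nhds.1 hf.continuousAt _ (by positivity)
  obtain ⟨b, c, hx, hmem, hsub⟩ := exists_Icc_mem_subset_of_mem_nhds near
  refine ⟨Icc b c, hmem, ?_⟩
  filter_upwards [Metric.tendsto_nhds.1 (hlim b) (ε / 3) (by positivity),
    Metric.tendsto_nhds.1 (hlim c) (ε / 3) (by positivity)] with i hib hic y hy
  have hfb := hsub (left_mem_Icc.2 (hx.1.trans hx.2))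
  have hfc := hsub (right_mem_Icc.2 (hx.1.trans hx.2))
  have hfy := hsub hy
  simp only [mem_ofPred_eq, Real.dist_eq, abs_lt] at hfb hfc hfy hib hic ⊢
  constructor <;> linarith [hF i hy.1, hF i hy.2]

theorem tendstoUniformly_of_monotone_of_le [OrderBot α] [CompactIccSpace α] {M : ι → ℝ} {m : ℝ}
    (hF : ∀ i, Monotone (F i)) (hf : Continuous f) (hlim : ∀ x, Tendsto (F · x) l (𝓝 (f x)))
    (htop : Tendsto f atTop (𝓝 m)) (hle : ∀ i x, F i x ≤ M i) (hM : Tendsto M l (𝓝 m)) :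
    TendstoUniformly F f l := by
  rw [Metric.tendstoUniformly_iff]
  intro ε hε
  obtain ⟨b, hb⟩ := eventually_atTop.1 (Metric.tendsto_nhds.1 htop (ε / 3) (by positivity))
  have initial : TendstoUniformlyOn F f l (Iic b) := by
    rw [← Icc_bot, ← tendstoLocallyUniformlyOn_iff_tendstoUniformlyOn_of_compact isCompact_Icc]
    exact (tendstoLocallyUniformly_of_monotone hF hf hlim).tendstoLocallyUniformlyOn
  filter_upwards [Metric.tendstoUniformlyOn_iff.1 initial ε hε,
    Metric.tendsto_nhds.1 (hlim b) (ε / 3) (by positivity),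
    Metric.tendsto_nhds.1 hM (ε / 3) (by positivity)] with i hinit hib hiM y
  rcases le_total y b with hyb | hby
  · exact hinit y hyb
  · have hfb := hb b le_rfl
    have hfy := hb y hby
    rw [Real.dist_eq, abs_lt] at hfb hfy hib hiM ⊢
    constructor <;> linarith [hF i hby, hle i y]

end MonotoneFunctions

section Crossing

/-- The points of the open half-line at which the graph of `ψ` lies strictly below the diagonal. -/
def belowDiagonal (ψ : ℝ → ℝ) : Set ℝ := {t | 0 < t ∧ ψ t < t}

/-- The point `inf {t > 0 : ψ t < t}` at which the graph of `ψ` first drops below the diagonal. It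
is meaningful only if `belowDiagonal ψ` is nonempty, since `sInf ∅ = 0`. -/
noncomputable def crossing (ψ : ℝ → ℝ) : ℝ := sInf (belowDiagonal ψ)

/-- The graph of `ψ` drops below the diagonal somewhere, and being star-shaped seen from the
origin it stays below from then on; concave functions bounded above and vanishing at `0` are the
typical example. -/
structure CrossesDiagonal (ψ : ℝ → ℝ) : Prop where
  antitoneOn_div : AntitoneOn (fun t => ψ t / t) (Ioi 0)
  nonempty : (belowDiagonal ψ).Nonempty

variable {ψ ψ' : ℝ → ℝ} {t m : ℝ}

theorem belowDiagonal_nonempty_of_le (h : ∀ t, 0 < t → ψ t ≤ m) : (belowDiagonal ψ).Nonempty := by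
  have hpos : 0 < max m 0 + 1 := by positivity
  exact ⟨max m 0 + 1, hpos, (h _ hpos).trans_lt (by linarith [le_max_left m 0])⟩

theorem bddBelow_belowDiagonal (ψ : ℝ → ℝ) : BddBelow (belowDiagonal ψ) :=
  ⟨0, fun _ ht => ht.1.le⟩

theorem crossing_nonneg (ψ : ℝ → ℝ) : 0 ≤ crossing ψ :=
  Real.sInf_nonneg fun _ ht => ht.1.le

theorem crossing_le (ht : 0 < t) (h : ψ t < t) : crossing ψ ≤ t :=
  csInf_le (bddBelow_belowDiagonal ψ) ⟨ht, h⟩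

theorem crossing_mono (h : ∀ t, 0 < t → ψ t ≤ ψ' t) (hne : (belowDiagonal ψ').Nonempty) :
    crossing ψ ≤ crossing ψ' :=
  csInf_le_csInf (bddBelow_belowDiagonal ψ) hne fun t ht => ⟨ht.1, (h t ht.1).trans_lt ht.2⟩

theorem crossing_const (hm : 0 ≤ m) : crossing (fun _ => m) = m := by
  have : belowDiagonal (fun _ => m) = Ioi m := ext fun t => ⟨And.right, fun h => ⟨hm.trans_lt h, h⟩⟩
  rw [crossing, this, csInf_Ioi]

theorem crossing_le_of_le (hm : 0 ≤ m) (h : ∀ t, 0 < t → ψ t ≤ m) : crossing ψ ≤ m :=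
  (crossing_mono h (belowDiagonal_nonempty_of_le fun _ _ => le_rfl)).trans_eq (crossing_const hm)

namespace CrossesDiagonal

theorem apply_lt_of_crossing_lt (hψ : CrossesDiagonal ψ) (ht : crossing ψ < t) : ψ t < t := by
  obtain ⟨u, ⟨hu, hψu⟩, hut⟩ := exists_lt_of_csInf_lt hψ.nonempty ht
  have ht0 : 0 < t := hu.trans hut
  rw [← div_lt_one ht0]
  exact (hψ.antitoneOn_div hu ht0 hut.le).trans_lt ((div_lt_one hu).2 hψu)

theorem le_crossing (hψ : CrossesDiagonal ψ) (h : t ≤ ψ t) : t ≤ crossing ψ :=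
  not_lt.1 fun hlt => (hψ.apply_lt_of_crossing_lt hlt).not_ge h

theorem lt_apply_of_lt_crossing (hψ : CrossesDiagonal ψ)
    (hstrict : StrictAntiOn (fun t => ψ t / t) {t | 0 < t ∧ 0 < ψ t}) (ht0 : 0 < t)
    (ht : t < crossing ψ) : t < ψ t := by
  obtain ⟨u, htu, hu⟩ := exists_between ht
  have hu0 : 0 < u := ht0.trans htu
  have hψu : u ≤ ψ u := not_lt.1 fun h => (crossing_le hu0 h).not_gt hu
  have one_le : 1 ≤ ψ t / t :=
    ((one_le_div hu0).2 hψu).trans (hψ.antitoneOn_div ht0 hu0 htu.le)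
  have hψt : 0 < ψ t := ht0.trans_le ((one_le_div ht0).1 one_le)
  rw [← one_lt_div ht0]
  exact ((one_le_div hu0).2 hψu).trans_lt (hstrict ⟨ht0, hψt⟩ ⟨hu0, hu0.trans_le hψu⟩ htu)

end CrossesDiagonal

theorem tendsto_crossing {ι : Type*} {l : Filter ι} {Ψ : ι → ℝ → ℝ}
    (hΨ : ∀ i, CrossesDiagonal (Ψ i)) (hψ : CrossesDiagonal ψ)
    (hstrict : StrictAntiOn (fun t => ψ t / t) {t | 0 < t ∧ 0 < ψ t})
    (hlim : ∀ t, 0 < t → Tendsto (Ψ · t) l (𝓝 (ψ t))) :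
    Tendsto (fun i => crossing (Ψ i)) l (𝓝 (crossing ψ)) := by
  refine tendsto_order.2 ⟨fun a ha => ?_, fun a ha => ?_⟩
  · rcases lt_or_ge a 0 with ha0 | ha0
    · exact .of_forall fun i => ha0.trans_le (crossing_nonneg _)
    obtain ⟨t, hat, ht⟩ := exists_between ha
    have ht0 : 0 < t := ha0.trans_lt hat
    filter_upwards [(hlim t ht0).eventually_const_lt (hψ.lt_apply_of_lt_crossing hstrict ht0 ht)]
      with i hi
    exact hat.trans_le ((hΨ i).le_crossing hi.le)
  · obtain ⟨t, ht, hta⟩ := exists_between ha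
    have ht0 : 0 < t := (crossing_nonneg ψ).trans_lt ht
    filter_upwards [(hlim t ht0).eventually_lt_const (hψ.apply_lt_of_crossing_lt ht)] with i hi
    exact (crossing_le ht0 hi).trans_lt hta

end Crossing

section ExponentialKernel

variable {c t x : ℝ}

theorem strictAntiOn_one_sub_exp_neg_mul_div (hc : 0 < c) :
    StrictAntiOn (fun t => (1 - Real.exp (-c * t)) / t) (Ioi 0) := by
  intro s (hs : 0 < s) t (ht : 0 < t) hst
  have hct : 0 < c * t := by positivity
  have hcs : 0 < c * s := by positivity
  have secant := strictConvexOn_exp.secant_strict_mono (mem_univ 0) (mem_univ (-c * t))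
    (mem_univ (-c * s)) (by linarith) (by linarith) (by nlinarith)
  have hquot : ∀ u, (Real.exp (-c * u) - Real.exp 0) / (-c * u - 0) =
      (1 - Real.exp (-c * u)) / u / c := fun u => by
    rw [Real.exp_zero, sub_zero, ← neg_sub, neg_mul, neg_div_neg_eq, div_div, mul_comm u]
  rw [hquot, hquot] at secant
  exact (div_lt_div_iff_of_pos_right hc).1 secant

theorem antitoneOn_one_sub_exp_neg_mul_div (hc : 0 ≤ c) :
    AntitoneOn (fun t => (1 - Real.exp (-c * t)) / t) (Ioi 0) := by
  rcases hc.eq_or_lt with rfl | hc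
  · simp [AntitoneOn]
  · exact (strictAntiOn_one_sub_exp_neg_mul_div hc).antitoneOn

theorem mul_one_sub_exp_neg_mul_nonneg (hx : 0 ≤ x) (ht : 0 ≤ t) :
    0 ≤ x * (1 - Real.exp (-x * t)) :=
  mul_nonneg hx (sub_nonneg.2 (Real.exp_le_one_iff.2 (by nlinarith)))

theorem mul_one_sub_exp_neg_mul_le (hx : 0 ≤ x) : x * (1 - Real.exp (-x * t)) ≤ x :=
  mul_le_of_le_one_right hx (sub_le_self _ (Real.exp_nonneg _))

theorem mul_one_sub_exp_neg_mul_le_mul_sq (hx : 0 ≤ x) :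
    x * (1 - Real.exp (-x * t)) ≤ t * x ^ 2 := by
  nlinarith [Real.add_one_le_exp (-x * t)]

theorem norm_mul_exp_neg_mul_le (hx : 0 ≤ x) (ht : 0 < t) :
    ‖x * Real.exp (-x * t)‖ ≤ t⁻¹ := by
  have h : x * t * Real.exp (-(x * t)) ≤ 1 :=
    (Real.mul_exp_neg_le_exp_neg_one _).trans (Real.exp_le_one_iff.2 (by norm_num))
  rw [Real.norm_of_nonneg (by positivity), ← one_div, le_div_iff₀ ht, neg_mul]
  linarith

end ExponentialKernel

section PhiOne

variable {Ω : Type*} [MeasurableSpace Ω] {P : Measure Ω} {X : Ω → ℝ} {a s t : ℝ}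

/-- The function `φ₁(t) = 𝔼[X (1 - e^{-X t})]` of a random variable `X`. -/
noncomputable def phiOne (P : Measure Ω) (X : Ω → ℝ) (t : ℝ) : ℝ :=
  ∫ ω, X ω * (1 - Real.exp (-X ω * t)) ∂P

@[simp]
theorem phiOne_zero (P : Measure Ω) (X : Ω → ℝ) : phiOne P X 0 = 0 := by
  simp [phiOne]

theorem norm_mul_one_sub_exp_neg_mul_le_ae (hX : 0 ≤ᵐ[P] X) (ht : 0 ≤ t) :
    ∀ᵐ ω ∂P, ‖X ω * (1 - Real.exp (-X ω * t))‖ ≤ X ω := by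
  filter_upwards [hX] with ω hω
  rw [Real.norm_of_nonneg (mul_one_sub_exp_neg_mul_nonneg hω ht)]
  exact mul_one_sub_exp_neg_mul_le hω

theorem integrable_mul_one_sub_exp_neg_mul (hX : 0 ≤ᵐ[P] X) (hXint : Integrable X P)
    (ht : 0 ≤ t) : Integrable (fun ω => X ω * (1 - Real.exp (-X ω * t))) P := by
  have hmeas := hXint.aestronglyMeasurable
  exact hXint.mono' (by fun_prop) (norm_mul_one_sub_exp_neg_mul_le_ae hX ht)

theorem phiOne_nonneg (hX : 0 ≤ᵐ[P] X) (ht : 0 ≤ t) : 0 ≤ phiOne P X t :=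
  integral_nonneg_of_ae (hX.mono fun _ hω => mul_one_sub_exp_neg_mul_nonneg hω ht)

theorem phiOne_le_integral (hX : 0 ≤ᵐ[P] X) (hXint : Integrable X P) (ht : 0 ≤ t) :
    phiOne P X t ≤ ∫ ω, X ω ∂P :=
  integral_mono_ae (integrable_mul_one_sub_exp_neg_mul hX hXint ht) hXint
    (hX.mono fun _ hω => mul_one_sub_exp_neg_mul_le hω)

theorem phiOne_le_mul_integral_sq (hX : 0 ≤ᵐ[P] X) (hXint : Integrable X P)
    (hXsq : Integrable (fun ω => X ω ^ 2) P) (ht : 0 ≤ t) :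
    phiOne P X t ≤ t * ∫ ω, X ω ^ 2 ∂P := by
  rw [← integral_const_mul]
  exact integral_mono_ae (integrable_mul_one_sub_exp_neg_mul hX hXint ht) (hXsq.const_mul t)
    (hX.mono fun _ hω => mul_one_sub_exp_neg_mul_le_mul_sq hω)

theorem monotoneOn_phiOne (hX : 0 ≤ᵐ[P] X) (hXint : Integrable X P) :
    MonotoneOn (phiOne P X) (Ici 0) := by
  intro s (hs : 0 ≤ s) t (ht : 0 ≤ t) hst
  refine integral_mono_ae (integrable_mul_one_sub_exp_neg_mul hX hXint hs)
    (integrable_mul_one_sub_exp_neg_mul hX hXint ht) ?_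
  filter_upwards [hX] with ω (hω : 0 ≤ X ω)
  have : -X ω * t ≤ -X ω * s := mul_le_mul_of_nonpos_left hst (neg_nonpos.2 hω)
  gcongr

theorem continuousOn_phiOne (hX : 0 ≤ᵐ[P] X) (hXint : Integrable X P) :
    ContinuousOn (phiOne P X) (Ici 0) :=
  continuousOn_of_dominated
    (fun _ ht => (integrable_mul_one_sub_exp_neg_mul hX hXint ht).aestronglyMeasurable)
    (fun _ ht => norm_mul_one_sub_exp_neg_mul_le_ae hX ht) hXint
    (ae_of_all _ fun _ => by fun_prop)

theorem tendsto_phiOne_atTop (hX : 0 ≤ᵐ[P] X) (hXint : Integrable X P) :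
    Tendsto (phiOne P X) atTop (𝓝 (∫ ω, X ω ∂P)) := by
  refine tendsto_integral_filter_of_dominated_convergence X ?_ ?_ hXint ?_
  · filter_upwards [eventually_ge_atTop 0] with t ht
    exact (integrable_mul_one_sub_exp_neg_mul hX hXint ht).aestronglyMeasurable
  · filter_upwards [eventually_ge_atTop 0] with t ht
    exact norm_mul_one_sub_exp_neg_mul_le_ae hX ht
  · filter_upwards [hX] with ω hω
    rcases hω.eq_or_lt with h0 | hpos
    · simp [← h0]
    · have hexp : Tendsto (fun t => Real.exp (-X ω * t)) atTop (𝓝 0) :=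
        Real.tendsto_exp_atBot.comp (tendsto_id.const_mul_atTop_of_neg (neg_neg_of_pos hpos))
      simpa using (hexp.const_sub 1).const_mul (X ω)

theorem phiOne_mul_div (P : Measure Ω) (X : Ω → ℝ) (a t : ℝ) :
    phiOne P X (a * t) / t = ∫ ω, X ω * ((1 - Real.exp (-(X ω * a) * t)) / t) ∂P := by
  rw [phiOne, ← integral_div]
  simp only [mul_div_assoc, neg_mul, mul_assoc]

theorem integrable_mul_one_sub_exp_neg_mul_div (hX : 0 ≤ᵐ[P] X) (hXint : Integrable X P)
    (ha : 0 ≤ a) (ht : 0 ≤ t) :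
    Integrable (fun ω => X ω * ((1 - Real.exp (-(X ω * a) * t)) / t)) P := by
  simpa only [mul_div_assoc, neg_mul, mul_assoc] using
    (integrable_mul_one_sub_exp_neg_mul hX hXint (mul_nonneg ha ht)).div_const t

theorem antitoneOn_phiOne_mul_div (hX : 0 ≤ᵐ[P] X) (hXint : Integrable X P) (ha : 0 ≤ a) :
    AntitoneOn (fun t => phiOne P X (a * t) / t) (Ioi 0) := by
  intro s (hs : 0 < s) t (ht : 0 < t) hst
  simp only [phiOne_mul_div]
  refine integral_mono_ae (integrable_mul_one_sub_exp_neg_mul_div hX hXint ha ht.le)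
    (integrable_mul_one_sub_exp_neg_mul_div hX hXint ha hs.le) (hX.mono fun ω hω => ?_)
  exact mul_le_mul_of_nonneg_left
    (antitoneOn_one_sub_exp_neg_mul_div (mul_nonneg hω ha) hs ht hst) hω

theorem strictAntiOn_phiOne_mul_div (hX : 0 ≤ᵐ[P] X) (hXint : Integrable X P) (ha : 0 ≤ a) :
    StrictAntiOn (fun t => phiOne P X (a * t) / t) {t | 0 < t ∧ 0 < phiOne P X (a * t)} := by
  rintro s ⟨hs, -⟩ t ⟨ht, hφt⟩ hst
  refine (antitoneOn_phiOne_mul_div hX hXint ha hs ht hst.le).lt_of_ne fun heq => hφt.ne' ?_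
  simp only [phiOne_mul_div] at heq
  have integrand_le := hX.mono fun ω hω => mul_le_mul_of_nonneg_left
    (antitoneOn_one_sub_exp_neg_mul_div (mul_nonneg hω ha) hs ht hst.le) hω
  have integrand_eq := (integral_eq_iff_of_ae_le
    (integrable_mul_one_sub_exp_neg_mul_div hX hXint ha ht.le)
    (integrable_mul_one_sub_exp_neg_mul_div hX hXint ha hs.le) integrand_le).1 heq
  refine integral_eq_zero_of_ae ?_
  filter_upwards [hX, integrand_eq] with ω (hω : 0 ≤ X ω) heqω
  by_contra hne
  have hXω : 0 < X ω := hω.lt_of_ne fun h => hne (by simp [← h])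
  have hapos : 0 < a := ha.lt_of_ne fun h => hne (by simp [← h])
  exact (mul_lt_mul_of_pos_left
    (strictAntiOn_one_sub_exp_neg_mul_div (mul_pos hXω hapos) hs ht hst) hXω).ne heqω

end PhiOne

section Theta

variable {Ω : Type*} [MeasurableSpace Ω] {P : Measure Ω} {X : Ω → ℝ}

/-- The quantity `θ(λ) = inf {t > 0 : φ₁(λt) < t}` attached to a random variable `X`. -/
noncomputable def theta (P : Measure Ω) (X : Ω → ℝ) (lam : ℝ) : ℝ :=
  crossing fun t => phiOne P X (lam * t)

theorem crossesDiagonal_phiOne_mul (hX : 0 ≤ᵐ[P] X) (hXint : Integrable X P) {a : ℝ}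
    (ha : 0 ≤ a) : CrossesDiagonal fun t => phiOne P X (a * t) where
  antitoneOn_div := antitoneOn_phiOne_mul_div hX hXint ha
  nonempty := belowDiagonal_nonempty_of_le fun _ ht =>
    phiOne_le_integral hX hXint (mul_nonneg ha ht.le)

theorem theta_le_integral (hX : 0 ≤ᵐ[P] X) (hXint : Integrable X P) {lam : ℝ} (hlam : 0 ≤ lam) :
    theta P X lam ≤ ∫ ω, X ω ∂P :=
  crossing_le_of_le (integral_nonneg_of_ae hX) fun _ ht =>
    phiOne_le_integral hX hXint (mul_nonneg hlam ht.le)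

theorem monotoneOn_theta (hX : 0 ≤ᵐ[P] X) (hXint : Integrable X P) :
    MonotoneOn (theta P X) (Ici 0) := by
  intro a (ha : 0 ≤ a) b (hb : 0 ≤ b) hab
  refine crossing_mono (fun t ht => ?_) (crossesDiagonal_phiOne_mul hX hXint hb).nonempty
  exact monotoneOn_phiOne hX hXint (mul_nonneg ha ht.le) (mul_nonneg hb ht.le) (by gcongr)

theorem continuousOn_theta (hX : 0 ≤ᵐ[P] X) (hXint : Integrable X P) :
    ContinuousOn (theta P X) (Ici 0) := by
  rw [continuousOn_iff_continuous_domRestrict, continuous_iff_continuousAt]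
  rintro ⟨lam, hlam : 0 ≤ lam⟩
  refine tendsto_crossing (fun a => crossesDiagonal_phiOne_mul hX hXint a.2)
    (crossesDiagonal_phiOne_mul hX hXint hlam) (strictAntiOn_phiOne_mul_div hX hXint hlam)
    fun t ht => ?_
  have hcont : ContinuousOn (fun a => phiOne P X (a * t)) (Ici 0) :=
    (continuousOn_phiOne hX hXint).comp (by fun_prop) fun a ha => mul_nonneg ha ht.le
  exact hcont.domRestrict.tendsto ⟨lam, hlam⟩

theorem tendsto_theta_atTop (hX : 0 ≤ᵐ[P] X) (hXint : Integrable X P) :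
    Tendsto (fun lam : ℝ≥0 => theta P X lam) atTop (𝓝 (∫ ω, X ω ∂P)) := by
  set m := ∫ ω, X ω ∂P
  have hm : 0 ≤ m := integral_nonneg_of_ae hX
  have hconst : CrossesDiagonal fun _ => m :=
    { antitoneOn_div := fun _ hs _ _ hst => div_le_div_of_nonneg_left hm hs hst
      nonempty := belowDiagonal_nonempty_of_le fun _ _ => le_rfl }
  rw [← crossing_const hm]
  refine tendsto_crossing (fun a => crossesDiagonal_phiOne_mul hX hXint a.2) hconst
    (fun _ hs _ _ hst => div_lt_div_of_pos_left hs.2 hs.1 hst) fun t ht => ?_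
  exact (tendsto_phiOne_atTop hX hXint).comp
    ((NNReal.tendsto_coe_atTop.2 tendsto_id).atTop_mul_const ht)

end Theta

section Convergence

variable {Ω ι : Type*} [MeasurableSpace Ω] {P : Measure Ω} {X : Ω → ℝ} {Xn : ι → Ω → ℝ}
  {l : Filter ι} {t : ℝ}

theorem phiOne_eq_integral_sub (hX : 0 ≤ᵐ[P] X) (hXint : Integrable X P) (ht : 0 ≤ t) :
    phiOne P X t = ∫ ω, X ω ∂P - ∫ ω, X ω * Real.exp (-X ω * t) ∂P := by
  have hsub : ∫ ω, X ω * Real.exp (-X ω * t) ∂P = ∫ ω, X ω ∂P - phiOne P X t := by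
    rw [phiOne, ← integral_sub hXint (integrable_mul_one_sub_exp_neg_mul hX hXint ht)]
    congr 1 with ω
    ring
  rw [hsub, sub_sub_cancel]

-- For `t > 0` the function `x ↦ x * exp (-x * t)` is bounded on `[0, ∞)`, which makes it a test
-- function for convergence in distribution.
theorem tendsto_integral_mul_exp_neg_mul (hX : 0 ≤ᵐ[P] X) (hXn : ∀ i, 0 ≤ᵐ[P] Xn i)
    (hdist : ∀ f : BoundedContinuousFunction ℝ ℝ,
      Tendsto (fun i => ∫ ω, f (Xn i ω) ∂P) l (𝓝 (∫ ω, f (X ω) ∂P))) (ht : 0 < t) :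
    Tendsto (fun i => ∫ ω, Xn i ω * Real.exp (-Xn i ω * t) ∂P) l
      (𝓝 (∫ ω, X ω * Real.exp (-X ω * t) ∂P)) := by
  let f : BoundedContinuousFunction ℝ ℝ := .ofNormedAddCommGroup
    (fun x => |x| * Real.exp (-|x| * t)) (by fun_prop) t⁻¹
    fun x => norm_mul_exp_neg_mul_le (abs_nonneg x) ht
  have hf : ∀ Y : Ω → ℝ, 0 ≤ᵐ[P] Y →
      ∫ ω, f (Y ω) ∂P = ∫ ω, Y ω * Real.exp (-Y ω * t) ∂P := fun Y hY =>
    integral_congr_ae (hY.mono fun ω hω => by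
      simp only [f, BoundedContinuousFunction.coe_ofNormedAddCommGroup, abs_of_nonneg hω])
  simpa only [hf X hX, hf _ (hXn _)] using hdist f

theorem tendsto_phiOne (hX : 0 ≤ᵐ[P] X) (hXn : ∀ i, 0 ≤ᵐ[P] Xn i)
    (hdist : ∀ f : BoundedContinuousFunction ℝ ℝ,
      Tendsto (fun i => ∫ ω, f (Xn i ω) ∂P) l (𝓝 (∫ ω, f (X ω) ∂P)))
    (hXint : Integrable X P) (hXnint : ∀ i, Integrable (Xn i) P)
    (hmean : Tendsto (fun i => ∫ ω, Xn i ω ∂P) l (𝓝 (∫ ω, X ω ∂P))) (ht : 0 ≤ t) :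
    Tendsto (fun i => phiOne P (Xn i) t) l (𝓝 (phiOne P X t)) := by
  rcases ht.eq_or_lt with rfl | ht
  · simp only [phiOne_zero, tendsto_const_nhds]
  · simp only [phiOne_eq_integral_sub hX hXint ht.le,
      phiOne_eq_integral_sub (hXn _) (hXnint _) ht.le]
    exact hmean.sub (tendsto_integral_mul_exp_neg_mul hX hXn hdist ht)

-- The bound `0 ≤ φ₁⁽ⁿ⁾(s) ≤ s * C` says that `𝔼[Xₙ]` is within `s * C` of the converging quantity
-- `𝔼[Xₙ e^{-s Xₙ}]`.
theorem tendsto_integral_of_integral_sq_le {C : ℝ} (hX : 0 ≤ᵐ[P] X) (hXn : ∀ i, 0 ≤ᵐ[P] Xn i)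
    (hdist : ∀ f : BoundedContinuousFunction ℝ ℝ,
      Tendsto (fun i => ∫ ω, f (Xn i ω) ∂P) l (𝓝 (∫ ω, f (X ω) ∂P)))
    (hXint : Integrable X P) (hXnint : ∀ i, Integrable (Xn i) P)
    (hXnsq : ∀ i, Integrable (fun ω => Xn i ω ^ 2) P)
    (hC : ∀ᶠ i in l, ∫ ω, Xn i ω ^ 2 ∂P ≤ C) :
    Tendsto (fun i => ∫ ω, Xn i ω ∂P) l (𝓝 (∫ ω, X ω ∂P)) := by
  rw [Metric.tendsto_nhds]
  intro ε hε
  have small_phi : ∀ᶠ s in 𝓝[>] 0, phiOne P X s < ε / 3 := by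
    have hφ := (continuousOn_phiOne hX hXint 0 self_mem_Ici).mono_left
      (nhdsWithin_mono 0 Ioi_subset_Ici_self)
    rw [phiOne_zero] at hφ
    exact hφ.eventually_lt_const (by positivity)
  have small_error : ∀ᶠ s in 𝓝[>] 0, s * C < ε / 3 := by
    have hlin : Tendsto (fun s : ℝ => s * C) (𝓝 0) (𝓝 0) := by
      simpa using (tendsto_id (x := 𝓝 (0 : ℝ))).mul_const C
    exact (hlin.mono_left nhdsWithin_le_nhds).eventually_lt_const (by positivity)
  have pos : ∀ᶠ s : ℝ in 𝓝[>] 0, 0 < s := self_mem_nhdsWithin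
  obtain ⟨s, hs, hφs, hsC⟩ := (pos.and (small_phi.and small_error)).exists
  filter_upwards [hC, Metric.tendsto_nhds.1
    (tendsto_integral_mul_exp_neg_mul hX hXn hdist hs) (ε / 3) (by positivity)] with i hCi hi
  have hφn : phiOne P (Xn i) s ≤ s * C :=
    (phiOne_le_mul_integral_sq (hXn i) (hXnint i) (hXnsq i) hs.le).trans (by gcongr)
  have hφ0 := phiOne_nonneg hX hs.le
  have hφn0 := phiOne_nonneg (hXn i) hs.le
  rw [phiOne_eq_integral_sub hX hXint hs.le] at hφs hφ0
  rw [phiOne_eq_integral_sub (hXn i) (hXnint i) hs.le] at hφn hφn0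
  rw [Real.dist_eq, abs_lt] at hi ⊢
  constructor <;> linarith

theorem tendsto_theta (hX : 0 ≤ᵐ[P] X) (hXn : ∀ i, 0 ≤ᵐ[P] Xn i)
    (hdist : ∀ f : BoundedContinuousFunction ℝ ℝ,
      Tendsto (fun i => ∫ ω, f (Xn i ω) ∂P) l (𝓝 (∫ ω, f (X ω) ∂P)))
    (hXint : Integrable X P) (hXnint : ∀ i, Integrable (Xn i) P)
    (hmean : Tendsto (fun i => ∫ ω, Xn i ω ∂P) l (𝓝 (∫ ω, X ω ∂P))) {lam : ℝ} (hlam : 0 ≤ lam) :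
    Tendsto (fun i => theta P (Xn i) lam) l (𝓝 (theta P X lam)) :=
  tendsto_crossing (fun i => crossesDiagonal_phiOne_mul (hXn i) (hXnint i) hlam)
    (crossesDiagonal_phiOne_mul hX hXint hlam) (strictAntiOn_phiOne_mul_div hX hXint hlam)
    fun _ ht => tendsto_phiOne hX hXn hdist hXint hXnint hmean (mul_nonneg hlam ht.le)

end Convergence

theorem stmt_4_general {Ω ι : Type*} [MeasurableSpace Ω] {P : Measure Ω} {l : Filter ι}
    {W : Ω → ℝ} {Wn : ι → Ω → ℝ} (hW0 : 0 ≤ᵐ[P] W) (hWn0 : ∀ i, 0 ≤ᵐ[P] Wn i)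
    (hdist : ∀ f : BoundedContinuousFunction ℝ ℝ,
      Tendsto (fun i => ∫ ω, f (Wn i ω) ∂P) l (𝓝 (∫ ω, f (W ω) ∂P)))
    (hW : Integrable W P) (hWn : ∀ i, Integrable (Wn i) P)
    (hmean : Tendsto (fun i => ∫ ω, Wn i ω ∂P) l (𝓝 (∫ ω, W ω ∂P))) :
    TendstoUniformlyOn (fun i => theta P (Wn i)) (theta P W) l (Ici 0) := by
  rw [tendstoUniformlyOn_iff_tendstoUniformly_comp_coe]
  exact tendstoUniformly_of_monotone_of_le (α := ℝ≥0)
    (fun i => monotoneOn_iff_monotone.1 (monotoneOn_theta (hWn0 i) (hWn i)))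
    (continuousOn_theta hW0 hW).domRestrict
    (fun lam => tendsto_theta hW0 hWn0 hdist hW hWn hmean lam.2)
    (tendsto_theta_atTop hW0 hW) (fun i lam => theta_le_integral (hWn0 i) (hWn i) lam.2) hmean

/-- Under Assumption 1, `sup_{λ > λ_crit} |θ⁽ⁿ⁾(λ) - θ(λ)| → 0` as `n → ∞`. -/
theorem stmt_4
    {Ω : Type*} [MeasurableSpace Ω] (P : Measure Ω) [IsProbabilityMeasure P]
    (W : Ω → ℝ) (Wn : ℕ → Ω → ℝ)
    (hWmeas : Measurable W) (hWnmeas : ∀ n, Measurable (Wn n))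
    (hWpos : ∀ᵐ ω ∂P, 0 < W ω) (hWnpos : ∀ n, ∀ᵐ ω ∂P, 0 < Wn n ω)
    (hdist : ∀ f : BoundedContinuousFunction ℝ ℝ,
      Tendsto (fun n => ∫ ω, f (Wn n ω) ∂P) atTop (𝓝 (∫ ω, f (W ω) ∂P)))
    (hW2 : Integrable (fun ω => (W ω) ^ 2) P)
    (hWn2 : ∀ n, Integrable (fun ω => (Wn n ω) ^ 2) P)
    (hmom : Tendsto (fun n => ∫ ω, (Wn n ω) ^ 2 ∂P) atTop (𝓝 (∫ ω, (W ω) ^ 2 ∂P)))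
    (lamCrit : ℝ) (hlamCrit : lamCrit = (∫ ω, (W ω) ^ 2 ∂P)⁻¹)
    (φ1n : ℕ → ℝ → ℝ)
    (hφ1n : ∀ n t, φ1n n t = ∫ ω, Wn n ω * (1 - Real.exp (-(Wn n ω) * t)) ∂P)
    (φ1 : ℝ → ℝ)
    (hφ1 : ∀ t, φ1 t = ∫ ω, W ω * (1 - Real.exp (-(W ω) * t)) ∂P)
    (θn : ℕ → ℝ → ℝ)
    (hθn : ∀ n lam, θn n lam = sInf {t : ℝ | 0 < t ∧ φ1n n (lam * t) - t < 0})
    (θ : ℝ → ℝ)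
    (hθ : ∀ lam, θ lam = sInf {t : ℝ | 0 < t ∧ φ1 (lam * t) - t < 0}) :
    TendstoUniformlyOn (fun n lam => θn n lam) θ atTop (Ioi lamCrit) := by
  have hW := ((memLp_two_iff_integrable_sq hWmeas.aestronglyMeasurable).2 hW2).integrable one_le_two
  have hWn := fun n => ((memLp_two_iff_integrable_sq
    (hWnmeas n).aestronglyMeasurable).2 (hWn2 n)).integrable one_le_two
  have hW0 : 0 ≤ᵐ[P] W := hWpos.mono fun _ => le_of_lt
  have hWn0 : ∀ n, 0 ≤ᵐ[P] Wn n := fun n => (hWnpos n).mono fun _ => le_of_lt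
  have hmean := tendsto_integral_of_integral_sq_le hW0 hWn0 hdist hW hWn hWn2
    (hmom.eventually_le_const (lt_add_one _))
  have hcrit : 0 ≤ lamCrit := hlamCrit ▸ inv_nonneg.2 (integral_nonneg fun _ => sq_nonneg _)
  simp only [hφ1, hφ1n, sub_neg] at hθ hθn
  obtain rfl : θ = theta P W := funext hθ
  obtain rfl : θn = fun n => theta P (Wn n) := funext₂ hθn
  exact (stmt_4_general hW0 hWn0 hdist hW hWn hmean).mono
    (Ioi_subset_Ici_self.trans (Ici_subset_Ici.2 hcrit))
end
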